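/- Let $(A, \mathfrak{m})$ be a Cohen-Macaulay local ring of dimension $d > 0$ with infinite residue field, $I$ an $\mathfrak{m}$-primary ideal with $I^3 = QI^2$ and $\ell_A(I^2/QI) = 1$ for a minimal reduction $Q$ of $I$. Then $e_1(I) = e_0(I) - \ell_A(A/I) + 1$, and if $d \geq 2$ then $e_2(I) = 1$ and $e_i(I) = 0$ for all $3 \leq i \leq d$. -/

import Mathlib

open IsLocalRing

/-- A Noetherian local ring is Cohen–Macaulay of dimension `d` iff its Krull dimension
is `d` and there is a regular sequence of length `d` in the maximal ideal. -/
def IsCohenMacaulayLocal (A : Type*) [CommRing A] [IsLocalRing A] (d : ℕ) : Prop :=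
  ringKrullDim A = d ∧
    ∃ rs : List A, rs.length = d ∧ (∀ x ∈ rs, x ∈ maximalIdeal A) ∧
      RingTheory.Sequence.IsRegular A rs

/-- `I` is primary to the maximal ideal (i.e. `𝔪`-primary). -/
def IsPrimaryToMax (A : Type*) [CommRing A] [IsLocalRing A] (I : Ideal A) : Prop :=
  I ≤ maximalIdeal A ∧ maximalIdeal A ≤ I.radical

/-- The length of a module, as the Krull dimension of its submodule lattice. -/
noncomputable def moduleLength (A M : Type*) [CommRing A] [AddCommGroup M]
    [Module A M] : WithBot ℕ∞ :=
  Order.krullDim (Submodule A M)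

namespace SallyVasconcelos

section RegularModulo

variable {A : Type*} [CommRing A]

/-- `x` is a nonzerodivisor on `A ⧸ J`. -/
def RegularMod (J : Ideal A) (x : A) : Prop := ∀ v, x * v ∈ J → v ∈ J

lemma mem_sup_span_singleton_iff {J : Ideal A} {x v : A} :
    v ∈ J ⊔ Ideal.span {x} ↔ ∃ c, v - x * c ∈ J := by
  rw [Submodule.mem_sup]
  constructor
  · rintro ⟨j, hj, y, hy, rfl⟩
    obtain ⟨c, rfl⟩ := Ideal.mem_span_singleton'.1 hy
    exact ⟨c, by simpa [mul_comm] using hj⟩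
  · rintro ⟨c, hc⟩
    exact ⟨_, hc, x * c, Ideal.mul_mem_right _ _ (Ideal.mem_span_singleton_self x), by ring⟩

/-- If `x` is regular modulo `J` and `w` is regular modulo `J` and modulo `J + (x)`, then `x` is
regular modulo `J + (w)`. -/
lemma RegularMod.swap {J : Ideal A} {x w : A} (hx : RegularMod J x)
    (hxw : RegularMod (J ⊔ Ideal.span {x}) w) : RegularMod (J ⊔ Ideal.span {w}) x := by
  intro v hv
  obtain ⟨u, hu⟩ := mem_sup_span_singleton_iff.1 hv
  obtain ⟨c, hc⟩ := mem_sup_span_singleton_iff.1 (hxw u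
    (mem_sup_span_singleton_iff.2 ⟨v, by rw [← neg_mem_iff]; simpa using hu⟩))
  refine mem_sup_span_singleton_iff.2 ⟨c, hx _ ?_⟩
  have := J.add_mem hu (J.mul_mem_left w hc)
  convert this using 1
  ring

lemma exists_finset_associated_primes [IsNoetherianRing A] (J : Ideal A) :
    ∃ S : Finset (Ideal A), (∀ p ∈ S, p.IsPrime) ∧ (∀ x, RegularMod J x ↔ ∀ p ∈ S, x ∉ p) ∧
      (∀ p ∈ S, J ≤ p ∧ ∃ v ∉ J, ∀ c ∈ p, c * v ∈ J) := by
  have hfin := associatedPrimes.finite A (A ⧸ J)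
  refine ⟨hfin.toFinset, fun p hp => IsAssociatedPrime.isPrime (hfin.mem_toFinset.1 hp),
    fun x => ?_, fun p hp => ?_⟩
  · have h := biUnion_associatedPrimes_eq_compl_regular A (A ⧸ J)
    have h' : x ∈ (⋃ p ∈ associatedPrimes A (A ⧸ J), (p : Set A)) ↔ ¬ IsSMulRegular (A ⧸ J) x := by
      rw [h]; rfl
    rw [isSMulRegular_quotient_iff_mem_of_smul_mem] at h'
    rw [← not_iff_not, RegularMod]
    simp only [smul_eq_mul] at h'
    rw [← h']
    simp
  · obtain ⟨-, y, hy⟩ := isAssociatedPrime_iff.1 (hfin.mem_toFinset.1 hp)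
    obtain ⟨v, rfl⟩ := Ideal.Quotient.mk_surjective y
    have key : ∀ c, c ∈ p ↔ c * v ∈ J := fun c => by
      rw [hy, Submodule.mem_colon_singleton, Submodule.mem_bot, ← Ideal.Quotient.eq_zero_iff_mem]
      rfl
    refine ⟨fun c hc => (key c).2 (J.mul_mem_right v hc), v, fun hv => ?_, fun c hc => (key c).1 hc⟩
    exact (IsAssociatedPrime.isPrime (hfin.mem_toFinset.1 hp)).ne_top
      ((Ideal.eq_top_iff_one _).2 ((key 1).2 (by simpa using hv)))

lemma RegularMod.mem_of_forall {J m : Ideal A} {x : A} (hx : RegularMod J x) (hxm : x ∈ m) (v : A)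
    (hv : ∀ c ∈ m, c * v ∈ J) : v ∈ J :=
  hx v (hv x hxm)

/-- Prime avoidance for the coset `x + K`. -/
lemma exists_add_notMem_of_finset (x : A) (K : Ideal A) (S : Finset (Ideal A))
    (hS : ∀ p ∈ S, p.IsPrime) (h : ∀ p ∈ S, ¬ (Ideal.span {x} ⊔ K ≤ p)) :
    ∃ k ∈ K, ∀ p ∈ S, x + k ∉ p := by
  classical
  induction hn : S.card generalizing S with
  | zero =>
    obtain rfl := Finset.card_eq_zero.1 hn
    exact ⟨0, K.zero_mem, by simp⟩
  | succ n ih =>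
    obtain ⟨p, hp⟩ := S.exists_minimal (Finset.card_pos.1 (by omega))
    have hpS := hp.prop
    have := hS p hpS
    obtain ⟨k, hk, hkS⟩ := ih (S.erase p) (fun q hq => hS q (Finset.mem_of_mem_erase hq))
      (fun q hq => h q (Finset.mem_of_mem_erase hq)) (by rw [Finset.card_erase_of_mem hpS]; omega)
    by_cases hxk : x + k ∈ p
    · have hKp : ¬ K ≤ p := fun hle => h p hpS (sup_le
        ((Ideal.span_singleton_le_iff_mem _).2 (by simpa using p.sub_mem hxk (hle hk))) hle)
      obtain ⟨k', hk', hkp'⟩ := SetLike.not_le_iff_exists.1 hKp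
      have hinf : ¬ (S.erase p).inf id ≤ p := by
        rw [Ideal.IsPrime.inf_le' this]
        rintro ⟨q, hq, hqp⟩
        exact (Finset.ne_of_mem_erase hq)
          (le_antisymm hqp (hp.le_of_le (Finset.mem_of_mem_erase hq) hqp))
      obtain ⟨r, hr, hrp⟩ := SetLike.not_le_iff_exists.1 hinf
      refine ⟨k + r * k', K.add_mem hk (K.mul_mem_left _ hk'), fun q hq hmem => ?_⟩
      rw [← add_assoc] at hmem
      by_cases hqp : q = p
      · subst hqp
        rcases this.mem_or_mem ((q.add_mem_iff_right hxk).1 hmem) with h1 | h1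
        exacts [hrp h1, hkp' h1]
      · have hq' := Finset.mem_erase.2 ⟨hqp, hq⟩
        have hrq : r ∈ q := (Finset.inf_le hq' : (S.erase p).inf id ≤ id q) hr
        exact hkS q hq' ((q.add_mem_iff_left (q.mul_mem_right _ hrq)).1 hmem)
    · refine ⟨k, hk, fun q hq => ?_⟩
      by_cases hqp : q = p
      · rwa [hqp]
      · exact hkS q (Finset.mem_erase.2 ⟨hqp, hq⟩)

lemma span_range_cons {n : ℕ} (x : A) (b : Fin n → A) :
    Ideal.span (Set.range (Fin.cons x b : Fin (n + 1) → A)) =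
      Ideal.span {x} ⊔ Ideal.span (Set.range b) := by
  rw [Fin.range_cons, Ideal.span_insert]

lemma span_range_snoc {n : ℕ} (x : A) (b : Fin n → A) :
    Ideal.span (Set.range (Fin.snoc b x : Fin (n + 1) → A)) =
      Ideal.span {x} ⊔ Ideal.span (Set.range b) := by
  rw [Fin.range_snoc, Ideal.span_insert]

/-- `b (d - 1), …, b 0` is a regular sequence on `A ⧸ J`. -/
def IsRevRegularMod (J : Ideal A) : (d : ℕ) → (Fin d → A) → Prop
  | 0, _ => True
  | d + 1, b => RegularMod (J ⊔ Ideal.span (Set.range (Fin.tail b))) (b 0) ∧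
      IsRevRegularMod J d (Fin.tail b)

lemma IsRevRegularMod.snoc {J : Ideal A} {d : ℕ} {b : Fin d → A} {x : A} (hx : RegularMod J x)
    (h : IsRevRegularMod (J ⊔ Ideal.span {x}) d b) :
    IsRevRegularMod J (d + 1) (Fin.snoc b x : Fin (d + 1) → A) := by
  induction d with
  | zero =>
    refine ⟨?_, trivial⟩
    simpa using! hx
  | succ d ih =>
    have ht : Fin.tail (Fin.snoc b x : Fin (d + 2) → A) = Fin.snoc (Fin.tail b) x := by
      rw [← Fin.cons_self_tail b, ← Fin.cons_snoc_eq_snoc_cons]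
      simp
    refine ⟨?_, ?_⟩
    · rw [ht, span_range_snoc, ← sup_assoc]
      have h0 : (Fin.snoc b x : Fin (d + 2) → A) 0 = b 0 := by
        rw [← Fin.castSucc_zero, Fin.snoc_castSucc]
      rw [h0]
      exact h.1
    · rw [ht]
      exact ih h.2

variable [IsLocalRing A]

/-- `A ⧸ J` admits a regular sequence of length `n` consisting of elements of the maximal ideal. -/
def HasRegularSequence : ℕ → Ideal A → Prop
  | 0, _ => True
  | n + 1, J => ∃ x ∈ maximalIdeal A, RegularMod J x ∧ HasRegularSequence n (J ⊔ Ideal.span {x})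

lemma hasRegularSequence_of_list (rs : List A) (J : Ideal A)
    (hm : ∀ x ∈ rs, x ∈ maximalIdeal A)
    (h : ∀ (i : ℕ) (hi : i < rs.length), RegularMod (J ⊔ Ideal.ofList (rs.take i)) rs[i]) :
    HasRegularSequence rs.length J := by
  induction rs generalizing J with
  | nil => trivial
  | cons x rs ih =>
    refine ⟨x, hm x (by simp), by simpa using! h 0 (by simp),
      ih _ (fun y hy => hm y (by simp [hy])) ?_⟩
    intro i hi
    simpa [sup_assoc] using! h (i + 1) (by simpa using hi)

lemma hasRegularSequence_bot {rs : List A} (hm : ∀ x ∈ rs, x ∈ maximalIdeal A)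
    (h : RingTheory.Sequence.IsRegular A rs) : HasRegularSequence rs.length (⊥ : Ideal A) := by
  refine hasRegularSequence_of_list rs ⊥ hm fun i hi => ?_
  have := (isSMulRegular_quotient_iff_mem_of_smul_mem _ _).1 (h.regular_mod_prev i hi)
  intro v hv
  simpa using this v (by simpa using hv)

/-- A common element of the maximal ideal that is regular modulo three ideals of positive depth. -/
lemma exists_common_regular [IsNoetherianRing A] {J₁ J₂ J₃ : Ideal A}
    (h₁ : ∀ v, (∀ c ∈ maximalIdeal A, c * v ∈ J₁) → v ∈ J₁)
    (h₂ : ∀ v, (∀ c ∈ maximalIdeal A, c * v ∈ J₂) → v ∈ J₂)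
    (h₃ : ∀ v, (∀ c ∈ maximalIdeal A, c * v ∈ J₃) → v ∈ J₃) :
    ∃ w ∈ maximalIdeal A, RegularMod J₁ w ∧ RegularMod J₂ w ∧ RegularMod J₃ w := by
  classical
  obtain ⟨S₁, hp₁, hr₁, hs₁⟩ := exists_finset_associated_primes J₁
  obtain ⟨S₂, hp₂, hr₂, hs₂⟩ := exists_finset_associated_primes J₂
  obtain ⟨S₃, hp₃, hr₃, hs₃⟩ := exists_finset_associated_primes J₃
  have key : ¬ ((maximalIdeal A : Set A) ⊆
      ⋃ i ∈ (↑(S₁ ∪ S₂ ∪ S₃) : Set (Ideal A)), (id i : Ideal A)) := by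
    rw [Ideal.subset_union_prime ⊥ ⊥]
    · rintro ⟨p, hp, hle⟩
      simp only [Finset.mem_union] at hp
      rcases hp with (hp | hp) | hp
      · obtain ⟨-, v, hv, hc⟩ := hs₁ p hp
        exact hv (h₁ v fun c h => hc c (hle h))
      · obtain ⟨-, v, hv, hc⟩ := hs₂ p hp
        exact hv (h₂ v fun c h => hc c (hle h))
      · obtain ⟨-, v, hv, hc⟩ := hs₃ p hp
        exact hv (h₃ v fun c h => hc c (hle h))
    · intro p hp _ _
      simp only [Finset.mem_union] at hp
      rcases hp with (hp | hp) | hp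
      exacts [hp₁ p hp, hp₂ p hp, hp₃ p hp]
  obtain ⟨w, hw, hwn⟩ := Set.not_subset.1 key
  have hn : ∀ p ∈ S₁ ∪ S₂ ∪ S₃, w ∉ p := fun p hp hwp => hwn (Set.mem_biUnion hp hwp)
  refine ⟨w, hw, (hr₁ w).2 fun p hp => hn p ?_, (hr₂ w).2 fun p hp => hn p ?_,
    (hr₃ w).2 fun p hp => hn p ?_⟩ <;> simp [hp]

/-- Socle elements modulo `(J, y)` yield socle elements modulo `(J, x)`. -/
lemma socle_transfer {J : Ideal A} {x y : A} (hx : RegularMod J x) (hy : RegularMod J y)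
    (hxm : x ∈ maximalIdeal A)
    (h : ∀ v, (∀ c ∈ maximalIdeal A, c * v ∈ J ⊔ Ideal.span {x}) → v ∈ J ⊔ Ideal.span {x})
    (v : A) (hv : ∀ c ∈ maximalIdeal A, c * v ∈ J ⊔ Ideal.span {y}) :
    v ∈ J ⊔ Ideal.span {y} := by
  obtain ⟨w, hw⟩ := mem_sup_span_singleton_iff.1 (hv x hxm)
  have hwx : w ∈ J ⊔ Ideal.span {x} := by
    refine h w fun c hc => ?_
    obtain ⟨u, hu⟩ := mem_sup_span_singleton_iff.1 (hv c hc)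
    refine mem_sup_span_singleton_iff.2 ⟨u, hy _ ?_⟩
    have := J.sub_mem (J.mul_mem_left x hu) (J.mul_mem_left c hw)
    convert this using 1
    ring
  obtain ⟨u, hu⟩ := mem_sup_span_singleton_iff.1 hwx
  refine mem_sup_span_singleton_iff.2 ⟨u, hx _ ?_⟩
  have := J.add_mem hw (J.mul_mem_left y hu)
  convert this using 1
  ring

lemma HasRegularSequence.quotient [IsNoetherianRing A] {n : ℕ} {J : Ideal A}
    (h : HasRegularSequence (n + 1) J)
    {y : A} (hym : y ∈ maximalIdeal A) (hy : RegularMod J y) :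
    HasRegularSequence n (J ⊔ Ideal.span {y}) := by
  induction n generalizing J y with
  | zero => trivial
  | succ n ih =>
    obtain ⟨x, hxm, hx, h'⟩ := h
    obtain ⟨x', hxm', hx', -⟩ := id h'
    have hsx := hx'.mem_of_forall hxm'
    obtain ⟨w, hwm, hw, hwx, hwy⟩ := exists_common_regular (hx.mem_of_forall hxm) hsx
      (socle_transfer hx hy hxm hsx)
    refine ⟨w, hwm, hwy, ?_⟩
    have h1 : HasRegularSequence (n + 1) (J ⊔ Ideal.span {w}) := by
      refine ⟨x, hxm, hx.swap hwx, ?_⟩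
      rw [sup_right_comm]
      exact ih h' hwm hwx
    rw [sup_right_comm]
    exact ih h1 hym (hy.swap hwy)

lemma exists_revRegular [IsNoetherianRing A] {d : ℕ} {J : Ideal A}
    (hJ : HasRegularSequence d J) (a : Fin d → A) (ham : ∀ i, a i ∈ maximalIdeal A)
    (hrad : maximalIdeal A ≤ (J ⊔ Ideal.span (Set.range a)).radical) :
    ∃ b : Fin d → A, Ideal.span (Set.range b) ≤ Ideal.span (Set.range a) ∧
      J ⊔ Ideal.span (Set.range b) = J ⊔ Ideal.span (Set.range a) ∧
      IsRevRegularMod J d b := by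
  induction d generalizing J with
  | zero => exact ⟨a, le_rfl, rfl, trivial⟩
  | succ d ih =>
    obtain ⟨x, hxm, hx, -⟩ := id hJ
    have hspan : Ideal.span (Set.range a) =
        Ideal.span {a 0} ⊔ Ideal.span (Set.range (Fin.tail a)) := by
      rw [← span_range_cons, Fin.cons_self_tail]
    obtain ⟨S, hp, hr, hs⟩ := exists_finset_associated_primes J
    obtain ⟨k, hk, hkS⟩ := exists_add_notMem_of_finset (a 0) (Ideal.span (Set.range (Fin.tail a)))
      S hp (fun p hpS hle => by
        have := hp p hpS
        obtain ⟨hJp, v, hv, hc⟩ := hs p hpS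
        rw [← hspan] at hle
        have hmp : maximalIdeal A ≤ p := hrad.trans
          ((Ideal.radical_mono (sup_le hJp hle)).trans_eq this.radical)
        exact hv (hx.mem_of_forall hxm v fun c h => hc c (hmp h)))
    have hreg : RegularMod J (a 0 + k) := (hr _).2 hkS
    have hkm : Ideal.span (Set.range (Fin.tail a)) ≤ maximalIdeal A := by
      rw [Ideal.span_le]
      rintro _ ⟨i, rfl⟩
      exact ham i.succ
    have hadd : Ideal.span {a 0 + k} ⊔ Ideal.span (Set.range (Fin.tail a)) =
        Ideal.span (Set.range a) := by
      rw [hspan]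
      refine le_antisymm (sup_le ?_ le_sup_right) (sup_le ?_ le_sup_right) <;>
        rw [Ideal.span_singleton_le_iff_mem]
      · exact add_mem (Ideal.mem_sup_left (Ideal.mem_span_singleton_self _))
          (Ideal.mem_sup_right hk)
      · rw [← add_mem_cancel_right (Ideal.mem_sup_right hk)]
        exact Ideal.mem_sup_left (Ideal.mem_span_singleton_self _)
    obtain ⟨b, hb1, hb2, hb3⟩ := ih (J := J ⊔ Ideal.span {a 0 + k})
      (hJ.quotient (add_mem (ham 0) (hkm hk)) hreg) (Fin.tail a) (fun i => ham i.succ)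
      (by rwa [sup_assoc, hadd])
    refine ⟨Fin.snoc b (a 0 + k), ?_, ?_, hb3.snoc hreg⟩
    · rw [span_range_snoc, ← hadd]
      exact sup_le_sup le_rfl hb1
    · rw [span_range_snoc, ← sup_assoc, hb2, sup_assoc, hadd]

end RegularModulo

section QuasiRegular

open MvPolynomial

variable {A : Type*} [CommRing A]

lemma eval_mem_mul_pow {ι : Type*} {b : ι → A} {K : Ideal A} {n : ℕ} {F : MvPolynomial ι A}
    (hF : F.IsHomogeneous n) (hK : F ∈ K.map (C : A →+* MvPolynomial ι A)) :
    eval b F ∈ K * Ideal.span (Set.range b) ^ n := by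
  rw [mem_map_C_iff] at hK
  rw [F.as_sum, map_sum]
  refine sum_mem fun s hs => ?_
  rw [← mul_one (coeff s F), ← C_mul_monomial, map_mul, eval_C]
  refine Ideal.mul_mem_mul (hK s) ((Ideal.mem_span_pow_iff_exists_isHomogeneous b _).2
    ⟨_, isHomogeneous_monomial 1 ?_, rfl⟩)
  rw [Finsupp.degree_eq_weight_one]
  exact hF (mem_support_iff.1 hs)

lemma exists_isHomogeneous_of_mem_mul_pow {ι : Type*} {b : ι → A} {K : Ideal A} {n : ℕ} {y : A}
    (hy : y ∈ K * Ideal.span (Set.range b) ^ n) :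
    ∃ F : MvPolynomial ι A, F.IsHomogeneous n ∧ F ∈ K.map (C : A →+* MvPolynomial ι A) ∧
      eval b F = y := by
  induction hy using Submodule.mul_induction_on' with
  | mem_mul_mem c hc w hw =>
    obtain ⟨F, hF, rfl⟩ := (Ideal.mem_span_pow_iff_exists_isHomogeneous b _).1 hw
    exact ⟨C c * F, hF.C_mul c, Ideal.mul_mem_right _ _ (Ideal.mem_map_of_mem _ hc), by simp⟩
  | add x _ y _ hx hy =>
    obtain ⟨F, hF, hFK, rfl⟩ := hx
    obtain ⟨G, hG, hGK, rfl⟩ := hy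
    exact ⟨F + G, hF.add hG, add_mem hFK hGK, by simp⟩

/-- Every form of degree `n` whose value at `b` lies in the `(n + 1)`-st power of the ideal
generated by `b` has all its coefficients in this ideal. -/
def IsQuasiRegular {ι : Type*} (b : ι → A) : Prop :=
  ∀ (n : ℕ) (F : MvPolynomial ι A), F.IsHomogeneous n →
    eval b F ∈ Ideal.span (Set.range b) ^ (n + 1) →
      F ∈ (Ideal.span (Set.range b)).map (C : A →+* MvPolynomial ι A)

lemma IsQuasiRegular.regularMod_pow {ι : Type*} {b : ι → A} (hb : IsQuasiRegular b) {x : A}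
    (hx : RegularMod (Ideal.span (Set.range b)) x) (n : ℕ) :
    RegularMod (Ideal.span (Set.range b) ^ n) x := by
  induction n with
  | zero => intro v _; simp
  | succ n ih =>
    intro v hv
    obtain ⟨F, hF, rfl⟩ := (Ideal.mem_span_pow_iff_exists_isHomogeneous b _).1
      (ih v (Ideal.pow_le_pow_right n.le_succ hv))
    have h := hb n (C x * F) (hF.C_mul x) (by simpa using hv)
    rw [pow_succ']
    refine eval_mem_mul_pow hF (mem_map_C_iff.2 fun s => hx _ ?_)
    simpa using mem_map_C_iff.1 h s

lemma exists_isHomogeneous_decomposition {d n : ℕ} {F : MvPolynomial (Fin (d + 1)) A}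
    (hF : F.IsHomogeneous (n + 1)) :
    ∃ (G : MvPolynomial (Fin d) A) (H : MvPolynomial (Fin (d + 1)) A), G.IsHomogeneous (n + 1) ∧
      H.IsHomogeneous n ∧ F = rename Fin.succ G + X 0 * H := by
  have hdec := F.modMonomial_add_divMonomial_single 0
  set R := F.modMonomial (Finsupp.single 0 1) with hR
  set H := F.divMonomial (Finsupp.single 0 1) with hH
  obtain ⟨G, hG⟩ := exists_rename_eq_of_vars_subset_range R Fin.succ (Fin.succ_injective d) (by
    intro i hi
    rw [Fin.range_succ]
    rintro rfl
    obtain ⟨s, hs, hs0⟩ := (mem_vars_iff_mem_support _).1 hi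
    rw [mem_support_iff] at hs
    refine hs (coeff_modMonomial_of_le _ ?_)
    rw [Finsupp.single_le_iff]
    exact Nat.one_le_iff_ne_zero.2 (Finsupp.mem_support_iff.1 hs0))
  refine ⟨G, H, ?_, ?_, by rw [hG, hdec]⟩
  · rw [← IsHomogeneous.rename_isHomogeneous_iff (Fin.succ_injective d), hG]
    intro s hs
    refine hF (fun h0 => hs ?_)
    by_cases hle : Finsupp.single 0 1 ≤ s
    · exact coeff_modMonomial_of_le _ hle
    · rw [hR, coeff_modMonomial_of_not_le _ hle, h0]
  · intro s hs
    rw [hH, coeff_divMonomial] at hs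
    have := hF hs
    rw [map_add] at this
    simp [Finsupp.weight_single] at this
    omega

lemma rename_mem_map_C {ι κ : Type*} {f : ι → κ} {K L : Ideal A} (hKL : K ≤ L)
    {F : MvPolynomial ι A} (hF : F ∈ K.map (C : A →+* MvPolynomial ι A)) :
    rename f F ∈ L.map (C : A →+* MvPolynomial κ A) := by
  have h : K.map (C : A →+* MvPolynomial ι A) ≤
      (L.map (C : A →+* MvPolynomial κ A)).comap (rename f : MvPolynomial ι A →ₐ[A] _) := by
    refine Ideal.map_le_iff_le_comap.2 fun c hc => ?_
    simpa using Ideal.mem_map_of_mem (C : A →+* MvPolynomial κ A) (hKL hc)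
  exact h hF

lemma IsQuasiRegular.of_tail {d : ℕ} {b : Fin (d + 1) → A} (hb : IsQuasiRegular (Fin.tail b))
    (hx : RegularMod (Ideal.span (Set.range (Fin.tail b))) (b 0)) : IsQuasiRegular b := by
  set Q := Ideal.span (Set.range b) with hQ
  set Q' := Ideal.span (Set.range (Fin.tail b)) with hQ'
  have hle : Q' ≤ Q := Ideal.span_mono (by rintro _ ⟨i, rfl⟩; exact ⟨i.succ, rfl⟩)
  have h0 : b 0 ∈ Q := Ideal.subset_span ⟨0, rfl⟩
  have hren : ∀ G : MvPolynomial (Fin d) A, eval b (rename Fin.succ G) = eval (Fin.tail b) G :=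
    fun G => by rw [eval_rename]; rfl
  intro n
  induction n with
  | zero =>
    intro F hF hmem
    rw [← totalDegree_zero_iff_isHomogeneous, totalDegree_eq_zero_iff_eq_C] at hF
    rw [hF] at hmem ⊢
    exact Ideal.mem_map_of_mem _ (by simpa using hmem)
  | succ n ih =>
    suffices key : ∀ F : MvPolynomial (Fin (d + 1)) A, F.IsHomogeneous (n + 1) → eval b F = 0 →
        F ∈ Q.map (C : A →+* MvPolynomial (Fin (d + 1)) A) by
      intro F hF hmem
      rw [pow_succ'] at hmem
      obtain ⟨W, hW, hWQ, hWF⟩ := exists_isHomogeneous_of_mem_mul_pow hmem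
      have := key (F - W) (hF.sub hW) (by rw [map_sub, hWF, sub_self])
      simpa using add_mem this hWQ
    intro F hF hF0
    obtain ⟨G, H, hG, hH, rfl⟩ := exists_isHomogeneous_decomposition hF
    rw [map_add, map_mul, eval_X, hren] at hF0
    have hHmem : eval b H ∈ Q' ^ (n + 1) := by
      refine hb.regularMod_pow hx (n + 1) _ ?_
      rw [eq_neg_of_add_eq_zero_right hF0, neg_mem_iff]
      exact (Ideal.mem_span_pow_iff_exists_isHomogeneous _ _).2 ⟨G, hG, rfl⟩
    have hHQ := ih H hH (Ideal.pow_right_mono hle _ hHmem)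
    obtain ⟨P, hP, hPH⟩ := (Ideal.mem_span_pow_iff_exists_isHomogeneous _ _).1 hHmem
    have hGP := hb (n + 1) (G + C (b 0) * P) (hG.add (hP.C_mul _)) (by
      rw [map_add, map_mul, eval_C, hPH, hF0]
      exact zero_mem _)
    have hGQ := rename_mem_map_C (f := Fin.succ) hle hGP
    rw [map_add, map_mul, rename_C] at hGQ
    refine add_mem ?_ (Ideal.mul_mem_left _ _ hHQ)
    exact (add_mem_cancel_right (Ideal.mul_mem_right _ _ (Ideal.mem_map_of_mem _ h0))).1 hGQ

lemma IsRevRegularMod.isQuasiRegular {d : ℕ} {b : Fin d → A} (h : IsRevRegularMod ⊥ d b) :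
    IsQuasiRegular b := by
  induction d with
  | zero =>
    intro n F hF hmem
    rw [Set.range_eq_empty, Ideal.span_empty, ← Ideal.zero_eq_bot, zero_pow n.succ_ne_zero,
      Ideal.zero_eq_bot, Ideal.mem_bot, eq_C_of_isEmpty F, eval_C] at hmem
    rw [eq_C_of_isEmpty F, hmem, C_0]
    exact zero_mem _
  | succ d ih =>
    refine (ih h.2).of_tail ?_
    simpa using h.1

end QuasiRegular

section Forms

open MvPolynomial

variable {A : Type*} [CommRing A]

/-- The form of degree `n` in `d` variables with prescribed coefficients. -/
noncomputable def formOfCoeffs (A : Type*) [CommRing A] (d n : ℕ) :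
    ((Finset.univ : Finset (Fin d)).finsuppAntidiag n → A) →ₗ[A] MvPolynomial (Fin d) A :=
  ∑ s, (monomial s.1) ∘ₗ LinearMap.proj s

lemma formOfCoeffs_apply {d n : ℕ} (c : (Finset.univ : Finset (Fin d)).finsuppAntidiag n → A) :
    formOfCoeffs A d n c = ∑ s, monomial s.1 (c s) := by
  simp [formOfCoeffs]

lemma degree_eq_iff_mem_finsuppAntidiag {d n : ℕ} {s : Fin d →₀ ℕ} :
    s ∈ (Finset.univ : Finset (Fin d)).finsuppAntidiag n ↔ s.degree = n := by
  simp [Finset.mem_finsuppAntidiag, Finsupp.degree_eq_sum]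

lemma isHomogeneous_formOfCoeffs {d n : ℕ}
    (c : (Finset.univ : Finset (Fin d)).finsuppAntidiag n → A) :
    (formOfCoeffs A d n c).IsHomogeneous n := by
  rw [formOfCoeffs_apply]
  exact IsHomogeneous.sum _ _ _ fun s _ =>
    isHomogeneous_monomial _ (degree_eq_iff_mem_finsuppAntidiag.1 s.2)

lemma coeff_formOfCoeffs {d n : ℕ} (c : (Finset.univ : Finset (Fin d)).finsuppAntidiag n → A)
    (s : (Finset.univ : Finset (Fin d)).finsuppAntidiag n) :
    coeff s.1 (formOfCoeffs A d n c) = c s := by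
  classical
  simp [formOfCoeffs_apply, coeff_sum, coeff_monomial]

lemma formOfCoeffs_coeff {d n : ℕ} {F : MvPolynomial (Fin d) A} (hF : F.IsHomogeneous n) :
    formOfCoeffs A d n (fun s => coeff s.1 F) = F := by
  ext s
  by_cases hs : s ∈ (Finset.univ : Finset (Fin d)).finsuppAntidiag n
  · exact coeff_formOfCoeffs _ ⟨s, hs⟩
  · rw [degree_eq_iff_mem_finsuppAntidiag] at hs
    rw [hF.coeff_eq_zero hs, (isHomogeneous_formOfCoeffs _).coeff_eq_zero hs]

lemma formOfCoeffs_mem_map_C {d n : ℕ} {K : Ideal A}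
    {c : (Finset.univ : Finset (Fin d)).finsuppAntidiag n → A} :
    formOfCoeffs A d n c ∈ K.map (C : A →+* MvPolynomial (Fin d) A) ↔ ∀ s, c s ∈ K := by
  refine ⟨fun h s => ?_, fun h => ?_⟩
  · rw [← coeff_formOfCoeffs c s]
    exact mem_map_C_iff.1 h s
  · rw [formOfCoeffs_apply]
    refine sum_mem fun s _ => ?_
    rw [← mul_one (c s), ← C_mul_monomial]
    exact Ideal.mul_mem_right _ _ (Ideal.mem_map_of_mem _ (h s))

/-- The value at `b` of the form with given coefficients, multiplied by `z`. -/
noncomputable def evalForm {d : ℕ} (b : Fin d → A) (n : ℕ) (z : A) :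
    ((Finset.univ : Finset (Fin d)).finsuppAntidiag n → A) →ₗ[A] A :=
  LinearMap.mulRight A z ∘ₗ (aeval b).toLinearMap ∘ₗ formOfCoeffs A d n

lemma evalForm_apply {d : ℕ} (b : Fin d → A) (n : ℕ) (z : A)
    (c : (Finset.univ : Finset (Fin d)).finsuppAntidiag n → A) :
    evalForm b n z c = eval b (formOfCoeffs A d n c) * z := by
  simp [evalForm, aeval_eq_eval]

lemma range_evalForm {d : ℕ} (b : Fin d → A) (n : ℕ) (z : A) :
    LinearMap.range (evalForm b n z) = Ideal.span (Set.range b) ^ n * Ideal.span {z} := by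
  ext y
  rw [Ideal.mem_mul_span_singleton]
  constructor
  · rintro ⟨c, rfl⟩
    exact ⟨_, (Ideal.mem_span_pow_iff_exists_isHomogeneous b _).2
      ⟨_, isHomogeneous_formOfCoeffs c, rfl⟩, (evalForm_apply b n z c).symm⟩
  · rintro ⟨w, hw, rfl⟩
    obtain ⟨F, hF, rfl⟩ := (Ideal.mem_span_pow_iff_exists_isHomogeneous b _).1 hw
    exact ⟨fun s => coeff s.1 F, by rw [evalForm_apply, formOfCoeffs_coeff hF]⟩

/-- If `M / L` is generated by the image of `σ → A` under `ψ` with kernel `σ → K`, then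
`ℓ(A / L) = |σ| ℓ(A / K) + ℓ(A / M)`. -/
lemma length_quotient_of_linearMap {σ : Type*} [Fintype σ] {K L M : Ideal A} (ψ : (σ → A) →ₗ[A] A)
    (hM : M = LinearMap.range ψ ⊔ L) (hψ : ∀ c, ψ c ∈ L ↔ ∀ s, c s ∈ K) :
    Module.length A (A ⧸ L) =
      Fintype.card σ * Module.length A (A ⧸ K) + Module.length A (A ⧸ M) := by
  classical
  have hLM : L ≤ M := hM ▸ le_sup_right
  have hcomap : Submodule.comap ψ L = Submodule.pi Set.univ fun _ : σ => K := by
    ext c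
    simp [hψ, Submodule.mem_pi]
  have h := Module.length_eq_add_of_exact (R := A)
    (Submodule.mapQ (Submodule.pi Set.univ fun _ : σ => K) L ψ hcomap.ge)
    (Submodule.factor hLM) ?_ (Submodule.factor_surjective hLM) ?_
  · rw [h, (Submodule.quotientPi fun _ : σ => K).length_eq]
    simp
  · rw [← LinearMap.ker_eq_bot, Submodule.ker_mapQ, hcomap, Submodule.mkQ_map_self]
  · rw [LinearMap.exact_iff, Submodule.range_mapQ, Submodule.factor, Submodule.ker_mapQ]
    rw [Submodule.comap_id, hM, Submodule.map_sup, Submodule.mkQ_map_self, sup_bot_eq]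

/-- A linear form with `F * l` having values in `I` has all its coefficients in `I`, provided some
coefficient of `F` is a unit. -/
lemma mem_of_forall_eval_mul_mem [IsLocalRing A] [Infinite (ResidueField A)] {ι : Type*} [Fintype ι]
    {I : Ideal A} {F : MvPolynomial ι A}
    (hF : F ∉ (maximalIdeal A).map (C : A →+* MvPolynomial ι A)) {c : ι → A}
    (h : ∀ u : ι → A, eval u F * ∑ i, c i * u i ∈ I) (i : ι) : c i ∈ I := by
  classical
  have hF0 : map (residue A) F ≠ 0 := by
    rwa [Ne, ← RingHom.mem_ker, MvPolynomial.ker_map, ker_residue]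
  have hmem : ∀ u : ι → A, eval (residue A ∘ u) (map (residue A) F) ≠ 0 → ∑ i, c i * u i ∈ I := by
    intro u hu
    rw [← MvPolynomial.map_eval, residue_ne_zero_iff_isUnit] at hu
    exact (Ideal.unit_mul_mem_iff_mem I hu).1 (h u)
  obtain ⟨v, hv⟩ : ∃ v, eval v (map (residue A) F) ≠ 0 := by
    by_contra! hcon
    exact hF0 (MvPolynomial.funext fun v => by rw [hcon v, map_zero])
  set p : Polynomial (ResidueField A) :=
    aeval (fun j => Polynomial.C (v j) + if j = i then Polynomial.X else 0) (map (residue A) F)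
    with hp
  have hpe : ∀ t, p.eval t = eval (fun j => v j + if j = i then t else 0) (map (residue A) F) := by
    intro t
    rw [hp, ← Polynomial.coe_aeval_eq_eval, comp_aeval_apply, aeval_eq_eval]
    congr 2 with j
    split_ifs <;> simp
  have hp0 : p * Polynomial.X ≠ 0 := by
    refine mul_ne_zero (fun h0 => hv ?_) Polynomial.X_ne_zero
    have := hpe 0
    simpa [h0] using this.symm
  obtain ⟨t, ht⟩ : ∃ t, (p * Polynomial.X).eval t ≠ 0 := by
    by_contra! hcon
    exact hp0 (Polynomial.funext fun t => by rw [hcon t, Polynomial.eval_zero])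
  rw [Polynomial.eval_mul, Polynomial.eval_X] at ht
  obtain ⟨u, rfl⟩ : ∃ u : ι → A, residue A ∘ u = v :=
    ⟨fun j => (residue_surjective (v j)).choose,
      funext fun j => (residue_surjective (v j)).choose_spec⟩
  obtain ⟨t, rfl⟩ := residue_surjective t
  have h1 := hmem u hv
  have h2 := hmem (fun j => u j + if j = i then t else 0) (by
    have := left_ne_zero_of_mul ht
    rw [hpe] at this
    convert this using 3
    ext j
    simp [apply_ite (residue A)])
  have h3 := I.sub_mem h2 h1
  rw [← Finset.sum_sub_distrib] at h3
  have h4 : c i * t ∈ I := by simpa [mul_add] using h3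
  exact (Ideal.mul_unit_mem_iff_mem I
    ((residue_ne_zero_iff_isUnit t).1 (right_ne_zero_of_mul ht))).1 h4

end Forms

section Lengths

open MvPolynomial

variable {A : Type*} [CommRing A] {d : ℕ} {b : Fin d → A}

lemma card_finsuppAntidiag_univ (d n : ℕ) :
    Fintype.card ((Finset.univ : Finset (Fin d)).finsuppAntidiag n) = d.multichoose n := by
  rw [Fintype.card_coe, Finset.card_finsuppAntidiag_nat_eq_multichoose, Finset.card_fin]

/-- For an ideal `I` containing the ideal `Q` generated by a quasi-regular sequence of length `d`,
`Q ^ n / I Q ^ n` is free of rank `(d + n - 1).choose n` over `A / I`. -/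
lemma IsQuasiRegular.length_quotient_mul_pow (hb : IsQuasiRegular b) {I : Ideal A}
    (hI : Ideal.span (Set.range b) ≤ I) (n : ℕ) :
    Module.length A (A ⧸ I * Ideal.span (Set.range b) ^ n) =
      d.multichoose n * Module.length A (A ⧸ I) +
        Module.length A (A ⧸ Ideal.span (Set.range b) ^ n) := by
  rw [← card_finsuppAntidiag_univ]
  refine length_quotient_of_linearMap (evalForm b n 1) ?_ fun c => ?_
  · rw [range_evalForm, Ideal.span_singleton_one, Ideal.mul_top, sup_eq_left.2 Ideal.mul_le_right]
  · rw [evalForm_apply, mul_one, ← formOfCoeffs_mem_map_C]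
    refine ⟨fun h => ?_, eval_mem_mul_pow (isHomogeneous_formOfCoeffs c)⟩
    obtain ⟨W, hW, hWI, hWe⟩ := exists_isHomogeneous_of_mem_mul_pow h
    have h0 : formOfCoeffs A d n c - W ∈ I.map (C : A →+* MvPolynomial (Fin d) A) :=
      Ideal.map_mono hI (hb n _ ((isHomogeneous_formOfCoeffs c).sub hW) (by simp [hWe]))
    simpa using add_mem h0 hWI

lemma IsQuasiRegular.length_quotient_pow (hb : IsQuasiRegular b) (n : ℕ) :
    Module.length A (A ⧸ Ideal.span (Set.range b) ^ (n + 1)) =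
      (d + 1).multichoose n * Module.length A (A ⧸ Ideal.span (Set.range b)) := by
  induction n with
  | zero => rw [zero_add, pow_one]; simp
  | succ n ih =>
    rw [pow_succ', hb.length_quotient_mul_pow le_rfl, ih, Nat.multichoose_succ_succ]
    push_cast
    rw [add_mul]

/-- The Sally module of an ideal `I` with `I ^ 2 = Q I + (z)` and `I ^ 3 = Q I ^ 2` is free of
rank one: `I ^ (n + 2) / I Q ^ (n + 1)` has length `(d + n - 1).choose n`. -/
lemma IsQuasiRegular.length_quotient_mul_pow_succ [IsLocalRing A] [Infinite (ResidueField A)]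
    (hb : IsQuasiRegular b) {I : Ideal A} (hI : Ideal.span (Set.range b) ≤ I)
    (hI3 : I ^ 3 = Ideal.span (Set.range b) * I ^ 2) {z : A}
    (hz : z ∉ I * Ideal.span (Set.range b))
    (hI2 : I ^ 2 = Ideal.span {z} ⊔ I * Ideal.span (Set.range b))
    (hmz : ∀ c ∈ maximalIdeal A, c * z ∈ I * Ideal.span (Set.range b)) (n : ℕ) :
    Module.length A (A ⧸ I * Ideal.span (Set.range b) ^ (n + 1)) =
      d.multichoose n + Module.length A (A ⧸ I ^ (n + 2)) := by
  have hpow : I ^ (n + 2) = Ideal.span (Set.range b) ^ n * I ^ 2 := by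
    induction n with
    | zero => simp
    | succ n ih =>
      rw [add_right_comm, pow_succ, ih, mul_assoc, ← pow_succ, hI3, ← mul_assoc, ← pow_succ]
  have hfield : Module.length A (A ⧸ maximalIdeal A) = 1 :=
    Module.length_eq_one_iff.2 (isSimpleModule_iff_quot_maximal.2
      ⟨maximalIdeal A, inferInstance, ⟨LinearEquiv.refl _ _⟩⟩)
  rw [← card_finsuppAntidiag_univ, ← mul_one (Nat.cast _), ← hfield]
  refine length_quotient_of_linearMap (evalForm b n z) ?_ fun c => ?_
  · rw [range_evalForm, hpow, hI2, Ideal.mul_sup, pow_succ, mul_left_comm]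
  rw [evalForm_apply, ← formOfCoeffs_mem_map_C]
  have hF := isHomogeneous_formOfCoeffs c
  set F := formOfCoeffs A d n c
  refine ⟨fun h => ?_, fun h => ?_⟩
  · by_contra hFm
    have hzQ : z ∈ Ideal.span (Set.range b) := by
      have h1 : F * C z ∈ (Ideal.span (Set.range b)).map (C : A →+* MvPolynomial (Fin d) A) :=
        hb n _ (by simpa using hF.mul (isHomogeneous_C (Fin d) z))
          (by simpa using Ideal.mul_le_right h)
      rw [mem_map_C_iff] at h1 hFm
      push Not at hFm
      obtain ⟨s, hs⟩ := hFm
      have := h1 s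
      rw [mul_comm, coeff_C_mul] at this
      refine (Ideal.mul_unit_mem_iff_mem _ ?_).1 this
      simpa using hs
    obtain ⟨u, rfl⟩ := Ideal.mem_span_range_iff_exists_fun.1 hzQ
    obtain ⟨W, hW, hWI, hWe⟩ := exists_isHomogeneous_of_mem_mul_pow h
    have hl : (∑ i, C (u i) * X i : MvPolynomial (Fin d) A).IsHomogeneous 1 :=
      IsHomogeneous.sum _ _ _ fun i _ => by
        simpa using (isHomogeneous_C _ (u i)).mul (isHomogeneous_X A i)
    have h0 : F * ∑ i, C (u i) * X i - W ∈ I.map (C : A →+* MvPolynomial (Fin d) A) :=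
      Ideal.map_mono hI (hb (n + 1) _ ((hF.mul hl).sub hW) (by simp [hWe]))
    have h1 : F * ∑ i, C (u i) * X i ∈ I.map (C : A →+* MvPolynomial (Fin d) A) := by
      simpa using add_mem h0 hWI
    have h2 : ∀ i, u i ∈ I := mem_of_forall_eval_mul_mem hFm fun v => by
      have hle : I.map (C : A →+* MvPolynomial (Fin d) A) ≤ I.comap (eval v) :=
        Ideal.map_le_iff_le_comap.2 fun x hx => by simpa using hx
      simpa using hle h1
    exact hz (sum_mem fun i _ => Ideal.mul_mem_mul (h2 i)
      (Ideal.subset_span (Set.mem_range_self i)))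
  · have hle : maximalIdeal A * Ideal.span {z} ≤ I * Ideal.span (Set.range b) := by
      rw [Ideal.mul_le]
      intro x hx y hy
      obtain ⟨w, rfl⟩ := Ideal.mem_span_singleton'.1 hy
      rw [mul_left_comm]
      exact Ideal.mul_mem_left _ _ (hmz x hx)
    have := Ideal.mul_mem_mul (eval_mem_mul_pow (b := b) hF h) (Ideal.mem_span_singleton_self z)
    rw [mul_right_comm] at this
    rw [pow_succ', ← mul_assoc]
    exact Ideal.mul_mono_left hle this

end Lengths

section Numerics

open Finset

lemma multichoose_succ_eq_choose (d n : ℕ) : (d + 1).multichoose n = (n + d).choose d := by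
  rw [Nat.multichoose_eq, add_right_comm, Nat.add_sub_cancel, add_comm d n, Nat.choose_symm_add]

/-- The binomial polynomials `(n + d - i).choose (d - i)`, `i ≤ d`, are linearly independent. -/
lemma eq_zero_of_sum_choose_eq_zero {d : ℕ} {c : ℕ → ℤ} {N : ℕ}
    (h : ∀ n ≥ N, ∑ i ∈ range (d + 1), c i * ((n + d - i).choose (d - i) : ℤ) = 0) :
    ∀ i ≤ d, c i = 0 := by
  induction d generalizing N with
  | zero => simpa using h N le_rfl
  | succ d ih =>
    have hlow : ∀ i ≤ d, c i = 0 := by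
      refine ih (N := N + 1) fun n hn => ?_
      obtain ⟨n, rfl⟩ : ∃ k, n = k + 1 := ⟨n - 1, by omega⟩
      have h1 := h (n + 1) (by omega)
      have h2 := h n (by omega)
      rw [sum_range_succ] at h1 h2
      simp only [Nat.sub_self, Nat.choose_zero_right] at h1 h2
      have hdiff : ∑ i ∈ range (d + 1), c i * ((n + 1 + d - i).choose (d - i) : ℤ) =
          ∑ i ∈ range (d + 1), c i * ((n + 1 + (d + 1) - i).choose (d + 1 - i) : ℤ) -
            ∑ i ∈ range (d + 1), c i * ((n + (d + 1) - i).choose (d + 1 - i) : ℤ) := by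
        rw [← sum_sub_distrib]
        refine sum_congr rfl fun i hi => ?_
        obtain ⟨j, rfl⟩ : ∃ j, d = i + j := ⟨d - i, by have := mem_range.1 hi; omega⟩
        rw [show n + 1 + (i + j) - i = n + j + 1 by omega, show i + j - i = j by omega,
          show n + 1 + (i + j + 1) - i = n + j + 1 + 1 by omega,
          show i + j + 1 - i = j + 1 by omega, show n + (i + j + 1) - i = n + j + 1 by omega,
          Nat.choose_succ_succ (n + j + 1)]
        push_cast
        ring
      rw [hdiff]
      linarith
    intro i hi
    obtain hi | rfl := Nat.le_succ_iff.1 hi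
    · exact hlow i hi
    · have h1 := h N le_rfl
      rw [sum_range_succ, sum_eq_zero fun i hi => by
        rw [hlow i (Nat.lt_succ_iff.1 (mem_range.1 hi)), zero_mul]] at h1
      simpa using h1

/-- The Hilbert coefficients `E, E - h + 1, 1, 0, 0, …`. -/
def sallyCoeff (E h : ℤ) : ℕ → ℤ
  | 0 => E
  | 1 => E - h + 1
  | 2 => 1
  | _ + 3 => 0

lemma sum_sallyCoeff (E h : ℤ) (d n : ℕ) :
    ∑ i ∈ range (d + 2),
        (-1) ^ i * sallyCoeff E h i * ((n + 1 + (d + 1) - i).choose (d + 1 - i) : ℤ) =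
      (d + 1).multichoose (n + 1) * h + (d + 2).multichoose n * E - (d + 1).multichoose n := by
  have hpascal : ∀ d, (n + 1 + (d + 1)).choose (d + 1) =
      (n + 1 + d).choose d + (n + (d + 1)).choose (d + 1) := fun d => by
    rw [← add_assoc, Nat.choose_succ_succ, add_right_comm n 1 d, add_assoc n d 1]
  rw [multichoose_succ_eq_choose, multichoose_succ_eq_choose, multichoose_succ_eq_choose]
  rcases d with - | d
  · simp [sum_range_succ, sallyCoeff]
    ring
  · rw [sum_range_succ', sum_range_succ', sum_range_succ', sum_eq_zero fun i _ => by
      simp [sallyCoeff]]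
    simp only [sallyCoeff, zero_add, Nat.sub_zero, pow_zero, one_mul, hpascal,
      show n + 1 + (d + 1 + 1) - 1 = n + 1 + (d + 1) by omega,
      show n + 1 + (d + 1 + 1) - (1 + 1) = n + 1 + d by omega, Nat.add_sub_cancel,
      show d + 1 + 1 - (1 + 1) = d by omega]
    push_cast
    ring

end Numerics

section Generator

variable {A : Type*} [CommRing A]

/-- If `M / (L ∩ M)` has length one, any `z ∈ M \ L` generates `M` modulo `L` and is killed by the
maximal ideal modulo `L`. -/
lemma exists_generator_of_length_eq_one [IsLocalRing A] {L M : Ideal A} (hLM : L ≤ M)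
    (h : Module.length A (M ⧸ Submodule.comap M.subtype L) = 1) :
    ∃ z, z ∉ L ∧ M = Ideal.span {z} ⊔ L ∧ ∀ c ∈ maximalIdeal A, c * z ∈ L := by
  have hs : IsSimpleModule A (M ⧸ Submodule.comap M.subtype L) := Module.length_eq_one_iff.1 h
  have := hs.nontrivial
  have hsurj : ∀ z w : M, z.1 ∉ L → ∃ t : A, w.1 - t * z.1 ∈ L := by
    intro z w hz
    obtain ⟨t, ht⟩ := IsSimpleModule.toSpanSingleton_surjective A
      (m := Submodule.Quotient.mk (p := Submodule.comap M.subtype L) z)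
      (fun h0 => hz ((Submodule.Quotient.mk_eq_zero (Submodule.comap M.subtype L)).1 h0))
      (Submodule.Quotient.mk w)
    exact ⟨t, (Submodule.Quotient.eq (Submodule.comap M.subtype L)).1 ht.symm⟩
  obtain ⟨y, hy⟩ := exists_ne (0 : M ⧸ Submodule.comap M.subtype L)
  obtain ⟨z, rfl⟩ := Submodule.Quotient.mk_surjective _ y
  have hz : z.1 ∉ L := fun hz => hy ((Submodule.Quotient.mk_eq_zero _).2 hz)
  refine ⟨z, hz, le_antisymm (fun x hx => ?_)
    (sup_le ((Ideal.span_singleton_le_iff_mem _).2 z.2) hLM), fun c hc => ?_⟩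
  · obtain ⟨t, ht⟩ := hsurj z ⟨x, hx⟩ hz
    exact Submodule.mem_sup.2
      ⟨t * z, Ideal.mul_mem_left _ _ (Ideal.mem_span_singleton_self _), _, ht, by simp⟩
  · by_contra hcz
    obtain ⟨t, ht⟩ := hsurj (c • z) z hcz
    have hu : IsUnit (1 - t * c) :=
      isUnit_one_sub_self_of_mem_nonunits _ (Ideal.mul_mem_left (maximalIdeal A) t hc)
    refine hz ((Ideal.unit_mul_mem_iff_mem L hu).1 ?_)
    simpa [sub_mul, mul_assoc] using ht

end Generator

end SallyVasconcelos

open SallyVasconcelos in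
/-- Sally–Vasconcelos: if `I³ = QI²` and `ℓ_A(I²/QI) = 1`, then
`e₁ = e₀ - ℓ_A(A/I) + 1`; and if `d ≥ 2` then `e₂ = 1` and `eᵢ = 0` for `3 ≤ i ≤ d`.
Here `H n = ℓ_A(A/I^{n+1})` (so `H 0 = ℓ_A(A/I)`) and the Hilbert coefficients
`e i` are specified by the Hilbert–Samuel polynomial. -/
theorem sally_vasconcelos (A : Type*) [CommRing A] [IsLocalRing A] [IsNoetherianRing A]
    [Infinite (ResidueField A)]
    (d : ℕ) (hd : 0 < d) (hCM : IsCohenMacaulayLocal A d)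
    (I Q : Ideal A) (hI : IsPrimaryToMax A I)
    (a : Fin d → A) (hQ : Q = Ideal.span (Set.range a)) (hQI : Q ≤ I)
    (hred : ∃ r : ℕ, I ^ (r + 1) = Q * I ^ r)
    (hI3 : I ^ 3 = Q * I ^ 2)
    (hlen : moduleLength A
      (↥(I ^ 2) ⧸ Submodule.comap (I ^ 2).subtype (Q * I)) = 1)
    (H : ℕ → ℕ)
    (hH : ∀ n : ℕ, moduleLength A (A ⧸ I ^ (n + 1)) = (H n : ℕ∞))
    (e : ℕ → ℤ) (N : ℕ)
    (hHS : ∀ n ≥ N, (H n : ℤ) =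
      ∑ i ∈ Finset.range (d + 1),
        (-1) ^ i * e i * ((n + d - i).choose (d - i) : ℤ)) :
    e 1 = e 0 - (H 0 : ℤ) + 1 ∧
      (2 ≤ d → e 2 = 1 ∧ ∀ i : ℕ, 3 ≤ i → i ≤ d → e i = 0) := by
  subst hQ
  obtain ⟨-, rs, rfl, hrs, hreg⟩ := hCM
  have hI3Q : I ^ 3 ≤ Ideal.span (Set.range a) := hI3 ▸ Ideal.mul_le_left
  obtain ⟨b, -, hbQ, hrev⟩ := exists_revRegular (hasRegularSequence_bot hrs hreg) a
    (fun i => hI.1 (hQI (Ideal.subset_span (Set.mem_range_self i)))) (by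
      rw [bot_sup_eq, ← Ideal.radical_idem]
      refine hI.2.trans (Ideal.radical_mono fun x hx => ⟨3, hI3Q (Ideal.pow_mem_pow hx 3)⟩))
  rw [bot_sup_eq, bot_sup_eq] at hbQ
  rw [← hbQ] at hQI hI3 hlen hI3Q
  have hb := hrev.isQuasiRegular
  have hlen' : Module.length A (↥(I ^ 2) ⧸
      Submodule.comap (I ^ 2).subtype (Ideal.span (Set.range b) * I)) = 1 := by
    rw [moduleLength, ← Module.coe_length] at hlen
    exact_mod_cast hlen
  have hH' : ∀ n, Module.length A (A ⧸ I ^ (n + 1)) = H n := fun n => by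
    have := hH n
    rw [moduleLength, ← Module.coe_length] at this
    exact_mod_cast this
  rw [mul_comm] at hlen'
  obtain ⟨z, hz, hI2, hmz⟩ := exists_generator_of_length_eq_one
    (by rw [pow_two]; exact Ideal.mul_mono_right hQI) hlen'
  obtain ⟨E, hE⟩ : ∃ E : ℕ, Module.length A (A ⧸ Ideal.span (Set.range b)) = E := by
    refine (ENat.ne_top_iff_exists.1 (ne_top_of_le_ne_top (ENat.natCast_ne_top (H 2)) ?_)).imp
      fun E h => h.symm
    rw [← hH' 2]
    exact Module.length_le_of_surjective _ (Submodule.factor_surjective hI3Q)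
  have hH0 : Module.length A (A ⧸ I) = H 0 := by
    rw [← hH' 0, zero_add, pow_one]
  obtain ⟨D, hD⟩ : ∃ D, rs.length = D + 1 := ⟨rs.length - 1, by omega⟩
  have hrec : ∀ n, (H (n + 1) : ℤ) = (D + 1).multichoose (n + 1) * H 0 +
      (D + 2).multichoose n * E - (D + 1).multichoose n := by
    intro n
    have h1 := hb.length_quotient_mul_pow_succ hQI hI3 hz hI2 hmz n
    rw [hb.length_quotient_mul_pow hQI, hb.length_quotient_pow, hH' (n + 1), hH0, hE, hD] at h1
    have h2 : (D + 1).multichoose (n + 1) * H 0 + (D + 2).multichoose n * E =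
      (D + 1).multichoose n + H (n + 1) := by exact_mod_cast h1
    zify at h2
    linarith
  have hcoeff : ∀ i ≤ D + 1, e i = sallyCoeff E (H 0) i := by
    intro i hi
    have := eq_zero_of_sum_choose_eq_zero
      (c := fun i => (-1) ^ i * (e i - sallyCoeff E (H 0) i)) (d := D + 1) (N := N + 1)
      (fun n hn => ?_) i hi
    · simpa [sub_eq_zero] using this
    · obtain ⟨n, rfl⟩ : ∃ k, n = k + 1 := ⟨n - 1, by omega⟩
      have h1 := hHS (n + 1) (by omega)
      rw [hrec, ← sum_sallyCoeff, hD, eq_comm, ← sub_eq_zero, ← Finset.sum_sub_distrib] at h1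
      rw [← h1]
      exact Finset.sum_congr rfl fun i _ => by ring
  rw [hD]
  refine ⟨?_, fun h => ⟨hcoeff 2 h, fun i hi hid => ?_⟩⟩
  · rw [hcoeff 1 (by omega), hcoeff 0 (by omega)]
    rfl
  · rw [hcoeff i hid]
    obtain ⟨j, rfl⟩ := Nat.exists_eq_add_of_le' hi
    rfl
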